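/- Let p be a prime, N = ⌊√(2p)⌋, and let I and J be subsets of F_p^* each consisting of ⌊√(8p)⌋ consecutive integers modulo p. Then the set W = { m·x^{-1} mod p : m ∈ I, x ∈ J } satisfies p − |W| ≤ (p − N)·p / N². -/

import Mathlib

/-!
A second-moment argument. For a slope `w` put `f_w (i, j) = j - w i` on the grid `[0, N)²`, let
`S_w` be its image and `E_w` the number of pairs of grid points with equal value, so that
`N⁴ ≤ |S_w| E_w ≤ p E_w` by Cauchy–Schwarz.

* Two grid points with distinct first coordinates collide for exactly one `w`; two with the same
  first coordinate collide only if they are equal. Hence `∑_w E_w ≤ p N² + N³ (N - 1)`.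
* If `w ∉ W`, then `m - w x` never vanishes on `I × J`. As `I` and `J` have length at least `2N`,
  each contains a translate of `[0, N) + [0, N)`, so `S_w` is disjoint from a set of the form
  `-c - S_w`. Therefore `2 |S_w| ≤ p` and `2 N⁴ ≤ p E_w`.

Summing the two lower bounds over all `w` gives `N⁴ (p + |Wᶜ|) ≤ p (p N² + N³ (N - 1))`, which
rearranges to the claim.
-/

section Collisions

variable {α β : Type*} [DecidableEq β]

/-- The number of ordered pairs of elements of `s` on which `f` takes the same value. -/
def collisions (s : Finset α) (f : α → β) : ℕ :=
  ∑ a ∈ s, ∑ b ∈ s, if f a = f b then 1 else 0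

/-- Cauchy–Schwarz, applied to the fibre sizes of `f`. -/
lemma sq_card_le_card_image_mul_collisions (s : Finset α) (f : α → β) :
    s.card ^ 2 ≤ (s.image f).card * collisions s f := by
  have h1 : s.card = ∑ c ∈ s.image f, (s.filter (fun a => f a = c)).card :=
    Finset.card_eq_sum_card_image f s
  have h2 : collisions s f = ∑ c ∈ s.image f, (s.filter (fun a => f a = c)).card ^ 2 := by
    unfold collisions
    rw [← Finset.sum_fiberwise_of_maps_to (g := f) (t := s.image f)
      (fun a ha => Finset.mem_image_of_mem f ha)]
    refine Finset.sum_congr rfl fun c _ => ?_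
    rw [sq, ← smul_eq_mul, ← Finset.sum_const]
    refine Finset.sum_congr rfl fun a ha => ?_
    rw [Finset.card_filter]
    refine Finset.sum_congr rfl fun b _ => ?_
    rw [(Finset.mem_filter.1 ha).2]
    simp only [eq_comm]
  rw [h2]
  nth_rewrite 1 [h1]
  exact sq_sum_le_card_mul_sum_sq

end Collisions

/-- The linear form `(i, j) ↦ j - w i` modulo `p`. -/
def slopeForm {p : ℕ} (w : ZMod p) (q : ℕ × ℕ) : ZMod p := (q.2 : ZMod p) - w * (q.1 : ZMod p)

/-- The index grid `[0, N) × [0, N)`. -/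
def grid (N : ℕ) : Finset (ℕ × ℕ) := Finset.range N ×ˢ Finset.range N

lemma natCast_inj_of_lt {p N : ℕ} (hNp : N ≤ p) {a b : ℕ} (ha : a < N) (hb : b < N)
    (h : (a : ZMod p) = b) : a = b := by
  rw [ZMod.natCast_eq_natCast_iff] at h
  exact Nat.ModEq.eq_of_lt_of_lt h (by omega) (by omega)

/-- Equal grid points collide for every slope, distinct ones with the same first coordinate for none,
and all others for at most one. -/
lemma card_slopes_le {p N : ℕ} [Fact p.Prime] (hNp : N ≤ p) {q r : ℕ × ℕ}
    (hq : q ∈ grid N) (hr : r ∈ grid N) :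
    (∑ w : ZMod p, if slopeForm w q = slopeForm w r then 1 else 0)
      ≤ (if q = r then p else 0) + (if q.1 = r.1 then 0 else 1) := by
  simp only [grid, Finset.mem_product, Finset.mem_range] at hq hr
  rw [← Finset.card_filter]
  by_cases h1 : q.1 = r.1
  · by_cases h2 : q = r
    · simp [h2, ZMod.card]
    · have h3 : q.2 ≠ r.2 := fun h => h2 (Prod.ext h1 h)
      rw [Finset.filter_false_of_mem]
      · simp
      · intro w _ h
        rw [slopeForm, slopeForm, h1, sub_left_inj] at h
        exact h3 (natCast_inj_of_lt hNp hq.2 hr.2 h)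
  · have h2 : q ≠ r := fun h => h1 (by rw [h])
    simp only [if_neg h1, if_neg h2, zero_add]
    have hne : (q.1 : ZMod p) - r.1 ≠ 0 := fun h =>
      h1 (natCast_inj_of_lt hNp hq.1 hr.1 (sub_eq_zero.1 h))
    refine Finset.card_le_one.2 fun w hw v hv => mul_right_cancel₀ hne ?_
    replace hw := (Finset.mem_filter.1 hw).2
    replace hv := (Finset.mem_filter.1 hv).2
    simp only [slopeForm] at hw hv
    linear_combination hv - hw

lemma sum_collisions_add_le {p N : ℕ} [Fact p.Prime] (hNp : N ≤ p) :
    (∑ w : ZMod p, collisions (grid N) (slopeForm w)) + N ^ 3 ≤ p * N ^ 2 + N ^ 4 := by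
  have h1 : (∑ w : ZMod p, collisions (grid N) (slopeForm w))
      ≤ ∑ q ∈ grid N, ∑ r ∈ grid N,
        ((if q = r then p else 0) + (if q.1 = r.1 then 0 else 1)) := by
    unfold collisions
    rw [Finset.sum_comm]
    refine Finset.sum_le_sum fun q hq => ?_
    rw [Finset.sum_comm]
    exact Finset.sum_le_sum fun r hr => card_slopes_le hNp hq hr
  have h2 : ∀ q ∈ grid N, (∑ r ∈ grid N,
      ((if q = r then p else 0) + (if q.1 = r.1 then 0 else 1))) + N = p + N ^ 2 := by
    intro q hq
    have h3 : (∑ r ∈ grid N, if q.1 = r.1 then 1 else 0) = N := by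
      have hq1 : q.1 < N := by
        simp only [grid, Finset.mem_product, Finset.mem_range] at hq
        exact hq.1
      have h4 : ∀ x ∈ Finset.range N, (∑ _y ∈ Finset.range N, if q.1 = x then 1 else 0)
          = if q.1 = x then N else 0 := by
        intro x _; split_ifs <;> simp
      rw [grid, Finset.sum_product, Finset.sum_congr rfl h4, Finset.sum_ite_eq,
        if_pos (Finset.mem_range.2 hq1)]
    have h4 : (∑ r ∈ grid N, if q.1 = r.1 then 0 else 1)
        + (∑ r ∈ grid N, if q.1 = r.1 then 1 else 0) = N ^ 2 := by
      rw [← Finset.sum_add_distrib]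
      have : ∀ r ∈ grid N, ((if q.1 = r.1 then 0 else 1) + if q.1 = r.1 then 1 else 0) = 1 := by
        intro r _; split_ifs <;> rfl
      rw [Finset.sum_congr rfl this]
      simp [grid, sq]
    rw [Finset.sum_add_distrib, Finset.sum_ite_eq, if_pos hq]
    omega
  have h5 := Finset.sum_congr rfl h2
  rw [Finset.sum_add_distrib] at h5
  simp only [Finset.sum_const, smul_eq_mul] at h5
  have h6 : (grid N).card = N ^ 2 := by simp [grid, sq]
  rw [h6] at h5
  nlinarith

/-- If a set of residues misses a reflection of itself, it has density at most one half. -/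
lemma two_mul_card_le {p : ℕ} [NeZero p] (S : Finset (ZMod p)) (c : ZMod p)
    (h : ∀ s ∈ S, ∀ t ∈ S, c + (s + t) ≠ 0) : 2 * S.card ≤ p := by
  have hd : Disjoint S (S.image fun s => -c - s) := by
    rw [Finset.disjoint_left]
    intro s hs hs'
    obtain ⟨t, ht, rfl⟩ := Finset.mem_image.1 hs'
    exact h _ hs t ht (by ring)
  have hc : (S.image fun s => -c - s).card = S.card :=
    Finset.card_image_of_injective _ sub_right_injective
  have := Finset.card_le_univ (S ∪ S.image fun s => -c - s)
  rw [Finset.card_union_of_disjoint hd, hc, ZMod.card] at this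
  omega

/-- A slope that is not a ratio from two intervals of length at least `2N` has a small image
of the grid. -/
lemma two_mul_card_image_le {p N L : ℕ} [Fact p.Prime] (hL : 2 * N ≤ L) (A B : ℤ) (w : ZMod p)
    (h : ∀ i < L, ∀ j < L,
      ((A + 1 + (j : ℕ) : ℤ) : ZMod p) ≠ w * ((B + 1 + (i : ℕ) : ℤ) : ZMod p)) :
    2 * ((grid N).image (slopeForm w)).card ≤ p := by
  refine two_mul_card_le _ ((A : ZMod p) + 1 - w * (B + 1)) ?_
  simp only [Finset.forall_mem_image, grid, Finset.mem_product, Finset.mem_range]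
  intro q hq r hr h0
  refine h (q.1 + r.1) (by omega) (q.2 + r.2) (by omega) ?_
  simp only [slopeForm] at h0
  push_cast
  linear_combination h0


/-- If `I, J ⊆ F_p^*` are intervals of `⌊√(8p)⌋` consecutive residues and `N = ⌊√(2p)⌋`,
then the complement of `W = {m/x : m ∈ I, x ∈ J}` has at most `(p-N)p/N²` elements. -/
theorem ratio_set_complement_bound (p : ℕ) (hp : p.Prime) (N : ℕ)
    (hN : N = ⌊Real.sqrt (2 * p)⌋₊) (I J : Finset (ZMod p))
    (hI : ∃ K : ℤ, I = (Finset.range ⌊Real.sqrt (8 * p)⌋₊).image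
        (fun i : ℕ => ((K + 1 + i : ℤ) : ZMod p)))
    (hI0 : (0 : ZMod p) ∉ I)
    (hJ : ∃ K : ℤ, J = (Finset.range ⌊Real.sqrt (8 * p)⌋₊).image
        (fun i : ℕ => ((K + 1 + i : ℤ) : ZMod p)))
    (hJ0 : (0 : ZMod p) ∉ J) :
    (p : ℝ) - ((Finset.image₂ (fun m x : ZMod p => m * x⁻¹) I J).card : ℝ)
      ≤ ((p : ℝ) - N) * p / (N : ℝ) ^ 2 := by
  have : Fact p.Prime := ⟨hp⟩
  set L := ⌊Real.sqrt (8 * p)⌋₊ with hLdef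
  set W := Finset.image₂ (fun m x : ZMod p => m * x⁻¹) I J with hW
  have hNsqrt : (N : ℝ) ≤ Real.sqrt (2 * p) := hN ▸ Nat.floor_le (Real.sqrt_nonneg _)
  have hNsq : (N : ℝ) ^ 2 ≤ 2 * p := by
    have := pow_le_pow_left₀ (Nat.cast_nonneg N) hNsqrt 2
    rwa [Real.sq_sqrt (by positivity)] at this
  have hL : 2 * N ≤ L := by
    refine Nat.le_floor (Real.le_sqrt_of_sq_le ?_)
    push_cast
    nlinarith
  have hNp : N ≤ p := by
    have h1 : N ^ 2 ≤ 2 * p := by exact_mod_cast hNsq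
    by_contra! h2
    nlinarith
  have hN0 : 0 < N := by
    rw [hN, Nat.floor_pos, Real.one_le_sqrt]
    have : (1 : ℝ) ≤ p := by exact_mod_cast hp.one_le
    linarith
  obtain ⟨A, hA⟩ := hI
  obtain ⟨B, hB⟩ := hJ
  have hgrid : (grid N).card ^ 2 = N ^ 4 := by simp [grid]; ring
  have key : ∀ w : ZMod p,
      N ^ 4 * (1 + if w ∈ W then 0 else 1) ≤ p * collisions (grid N) (slopeForm w) := by
    intro w
    have hcs := sq_card_le_card_image_mul_collisions (grid N) (slopeForm w)
    rw [hgrid] at hcs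
    split_ifs with hw
    · have h1 : ((grid N).image (slopeForm w)).card ≤ p := by
        simpa [ZMod.card] using Finset.card_le_univ ((grid N).image (slopeForm w))
      nlinarith
    · have h1 : 2 * ((grid N).image (slopeForm w)).card ≤ p := by
        refine two_mul_card_image_le hL A B w fun i hi j hj h => hw ?_
        have hm : ((A + 1 + (j : ℕ) : ℤ) : ZMod p) ∈ I := by
          rw [hA]; exact Finset.mem_image.2 ⟨j, Finset.mem_range.2 hj, rfl⟩
        have hx : ((B + 1 + (i : ℕ) : ℤ) : ZMod p) ∈ J := by
          rw [hB]; exact Finset.mem_image.2 ⟨i, Finset.mem_range.2 hi, rfl⟩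
        refine Finset.mem_image₂.2 ⟨_, hm, _, hx, ?_⟩
        rw [h, mul_inv_cancel_right₀ (fun h0 => hJ0 (h0 ▸ hx))]
      nlinarith
  have hsum := Finset.sum_le_sum fun w (_ : w ∈ Finset.univ) => key w
  rw [← Finset.mul_sum, ← Finset.mul_sum, Finset.sum_add_distrib] at hsum
  have hbad : (∑ w : ZMod p, if w ∈ W then 0 else 1) + W.card = p := by
    have h1 : (∑ w : ZMod p, if w ∈ W then 0 else 1) = Wᶜ.card := by
      rw [Finset.compl_eq_univ_sdiff, ← Finset.filter_notMem_eq_sdiff, Finset.card_filter]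
      exact Finset.sum_congr rfl fun w _ => by split_ifs <;> rfl
    rw [h1, Finset.card_compl_add_card, ZMod.card]
  have hE := sum_collisions_add_le (N := N) hNp
  simp only [Finset.sum_const, Finset.card_univ, ZMod.card, smul_eq_mul, mul_one] at hsum
  set b := ∑ w : ZMod p, if w ∈ W then 0 else 1
  set E := ∑ w : ZMod p, collisions (grid N) (slopeForm w)
  have hb : (p : ℝ) - W.card = b := by
    rw [sub_eq_iff_eq_add]; exact_mod_cast hbad.symm
  have hsumR : (N : ℝ) ^ 4 * (p + b) ≤ p * E := by exact_mod_cast hsum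
  have hER : (E : ℝ) + N ^ 3 ≤ p * N ^ 2 + N ^ 4 := by exact_mod_cast hE
  have hNR : (0 : ℝ) < N := by exact_mod_cast hN0
  rw [hb, le_div_iff₀ (by positivity)]
  refine le_of_mul_le_mul_left ?_ (pow_pos hNR 2)
  have := mul_le_mul_of_nonneg_left hER (Nat.cast_nonneg (α := ℝ) p)
  nlinarith
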